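/- arXiv:2203.16206 — 2 statements merged into one kernel-verified Lean document; each statement's English description precedes it below -/
import Mathlib

section
/- Let b : ℝ → ℝ be differentiable with b(0) = 0 and b'(v) = √(λ₁² − K·(λ₁²·cos²(b v) + λ₂²·sin²(b v))) for all v, let W > 0 satisfy b(v + W) = b(v) + π for all v, and let x₃ : ℝ → ℝ be differentiable with x₃(0) = 0 and x₃'(v) = λ₁·λ₂·K/(λ₁ + b'(v)) for all v. Then: (1) x₃ is a bijection from ℝ to ℝ; (2) x₃ is odd, i.e. x₃(−v) = −x₃(v) for all v; (3) x₃(v + W) = x₃(v) + x₃(W) for all v ∈ ℝ. -/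
open Real

/-!
Both symmetries of `x3` are inherited from symmetries of its derivative, which depends on `v` only
through `deriv b v`. Differentiating `b (v + W) = b v + π` shows that `deriv b` is `W`-periodic.
Since `b` solves an autonomous equation `b' = g ∘ b` with `g` even and positive, `v ↦ -b (-v)`
solves the same initial value problem; separation of variables gives uniqueness, so `b` is odd and
`deriv b` is even. Finally `deriv b` is nonnegative and bounded, so `deriv x3` has constant sign and
stays away from zero, which makes `x3` a bijection.
-/

section DerivSymmetry

variable {𝕜 E : Type*} [NontriviallyNormedField 𝕜] [NormedAddCommGroup E] [NormedSpace 𝕜 E]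
  {f : 𝕜 → E}

theorem even_deriv_of_odd (hodd : f.Odd) : (deriv f).Even := by
  intro x
  have hreflect : (fun y => -f (-y)) = f := funext fun y => by rw [hodd y, neg_neg]
  rw [← congrFun (congrArg deriv hreflect) x, deriv.fun_neg, deriv_comp_neg, neg_neg]

theorem periodic_deriv_of_apply_add {T : 𝕜} {c : E} (hadd : ∀ x, f (x + T) = f x + c) :
    (deriv f).Periodic T := by
  intro x
  rw [← deriv_comp_add_const, funext hadd, deriv_add_const]

end DerivSymmetry

section Primitives

variable {𝕜 E : Type*} [RCLike 𝕜] [NormedAddCommGroup E] [NormedSpace 𝕜 E] {f g : 𝕜 → E}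

theorem eq_of_deriv_eq (hf : Differentiable 𝕜 f) (hg : Differentiable 𝕜 g)
    (hderiv : ∀ x, deriv f x = deriv g x) {a : 𝕜} (ha : f a = g a) : f = g :=
  Set.eqOn_univ f g |>.1 <| isOpen_univ.eqOn_of_deriv_eq isPreconnected_univ
    hf.differentiableOn hg.differentiableOn (fun x _ => hderiv x) (Set.mem_univ a) ha

theorem odd_of_even_deriv (hf : Differentiable 𝕜 f) (hf0 : f 0 = 0) (heven : (deriv f).Even) :
    f.Odd := by
  have hreflect : (fun x => -f (-x)) = f :=
    eq_of_deriv_eq (a := 0) (hf.comp differentiable_neg).neg hf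
      (fun x => by rw [deriv.fun_neg, deriv_comp_neg, neg_neg, heven x]) (by simp [hf0])
  exact fun x => neg_eq_iff_eq_neg.1 (congrFun hreflect x)

theorem apply_add_of_periodic_deriv (hf : Differentiable 𝕜 f) {T : 𝕜}
    (hperiodic : (deriv f).Periodic T) (x : 𝕜) : f (x + T) = f x + (f T - f 0) := by
  have htranslate : (fun y => f (y + T)) = fun y => f y + (f T - f 0) :=
    eq_of_deriv_eq (a := 0) (hf.comp (differentiable_id.add_const T)) (hf.add_const _)
      (fun y => by rw [deriv_comp_add_const, deriv_add_const, hperiodic y]) (by simp)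
  exact congrFun htranslate x

end Primitives

section Autonomous

variable {g b c : ℝ → ℝ}

-- A primitive `G` of `1 / g` turns every solution into `G (b v) = v + const`.
theorem eq_of_deriv_eq_comp_pos (hg : Continuous g) (hgpos : ∀ y, 0 < g y)
    (hb : Differentiable ℝ b) (hb' : ∀ v, deriv b v = g (b v))
    (hc : Differentiable ℝ c) (hc' : ∀ v, deriv c v = g (c v))
    {a : ℝ} (ha : b a = c a) : b = c := by
  let G : ℝ → ℝ := fun y => ∫ t in (0 : ℝ)..y, (g t)⁻¹
  have hG (y : ℝ) : HasDerivAt G (g y)⁻¹ y :=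
    (hg.inv₀ fun y => (hgpos y).ne').integral_hasStrictDerivAt 0 y |>.hasDerivAt
  have hG_mono : StrictMono G := strictMono_of_hasDerivAt_pos hG fun y => inv_pos.2 (hgpos y)
  have hG_comp {u : ℝ → ℝ} (hu : Differentiable ℝ u) (hu' : ∀ v, deriv u v = g (u v)) (v : ℝ) :
      HasDerivAt (G ∘ u) 1 v := by
    have hchain := (hG (u v)).comp v (hu v).hasDerivAt
    rwa [hu', inv_mul_cancel₀ (hgpos _).ne'] at hchain
  have hG_eq : G ∘ b = G ∘ c :=
    eq_of_deriv_eq (a := a) (fun v => (hG_comp hb hb' v).differentiableAt)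
      (fun v => (hG_comp hc hc' v).differentiableAt)
      (fun v => by rw [(hG_comp hb hb' v).deriv, (hG_comp hc hc' v).deriv])
      (congrArg G ha)
  exact hG_mono.injective.comp_left hG_eq

theorem odd_of_deriv_eq_comp_even (hg : Continuous g) (hgpos : ∀ y, 0 < g y) (hgeven : g.Even)
    (hb : Differentiable ℝ b) (hb' : ∀ v, deriv b v = g (b v)) (hb0 : b 0 = 0) : b.Odd := by
  have hreflect : (fun v => -b (-v)) = b :=
    eq_of_deriv_eq_comp_pos hg hgpos (a := 0) (hb.comp differentiable_neg).neg
      (fun v => by rw [deriv.fun_neg, deriv_comp_neg, neg_neg, hb', hgeven]) hb hb'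
      (by simp [hb0])
  exact fun v => neg_eq_iff_eq_neg.1 (congrFun hreflect v)

end Autonomous

section Bijectivity

variable {f : ℝ → ℝ}

theorem bijective_of_pos_le_deriv (hf : Differentiable ℝ f) {m : ℝ} (hm : 0 < m)
    (hf' : ∀ x, m ≤ deriv f x) : Function.Bijective f := by
  have hgrowth := mul_sub_le_image_sub_of_le_deriv hf hf'
  refine ⟨(strictMono_of_deriv_pos fun x => hm.trans_le (hf' x)).injective,
    hf.continuous.surjective ?_ ?_⟩
  · refine Filter.tendsto_atTop_mono' _ ?_
      (Filter.tendsto_atTop_add_const_right _ (f 0) (Filter.tendsto_id.const_mul_atTop hm))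
    filter_upwards [Filter.eventually_ge_atTop 0] with x hx
    rw [id_eq]
    linarith [hgrowth hx]
  · refine Filter.tendsto_atBot_mono' _ ?_
      (Filter.tendsto_atBot_add_const_right _ (f 0) (Filter.tendsto_id.const_mul_atBot hm))
    filter_upwards [Filter.eventually_le_atBot 0] with x hx
    rw [id_eq]
    linarith [hgrowth hx]

theorem bijective_of_deriv_eq_div (hf : Differentiable ℝ f) {s : ℝ → ℝ} {a l M : ℝ}
    (ha : a ≠ 0) (hl : 0 < l) (hs : ∀ x, 0 ≤ s x) (hsM : ∀ x, s x ≤ M)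
    (hf' : ∀ x, deriv f x = a / (l + s x)) : Function.Bijective f := by
  have hM : 0 ≤ M := (hs 0).trans (hsM 0)
  have hnormalized : Function.Bijective fun x => a⁻¹ * f x := by
    refine bijective_of_pos_le_deriv (hf.const_mul a⁻¹) (m := (l + M)⁻¹) (by positivity) fun x => ?_
    rw [deriv_const_mul_field, hf', div_eq_mul_inv, inv_mul_cancel_left₀ ha]
    exact inv_anti₀ (add_pos_of_pos_of_nonneg hl (hs x)) (by linarith [hsM x])
  exact (mulLeft_bijective₀ a⁻¹ (inv_ne_zero ha)).of_comp_iff' f |>.1 hnormalized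

end Bijectivity

/-- The right-hand side, as a function of the angle `y = b v`, of the autonomous equation
`b' = helicoidSpeed l1 l2 K ∘ b` for the angle function `b` of the helicoid. -/
noncomputable def helicoidSpeed (l1 l2 K y : ℝ) : ℝ :=
  √(l1 ^ 2 - K * (l1 ^ 2 * cos y ^ 2 + l2 ^ 2 * sin y ^ 2))

namespace helicoidSpeed

variable (l1 l2 K : ℝ)

theorem eq_sqrt_combo (y : ℝ) :
    helicoidSpeed l1 l2 K y =
      √(cos y ^ 2 * (l1 ^ 2 - K * l1 ^ 2) + sin y ^ 2 * (l1 ^ 2 - K * l2 ^ 2)) := by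
  rw [helicoidSpeed]
  congr 1
  linear_combination -l1 ^ 2 * cos_sq_add_sin_sq y

theorem continuous : Continuous (helicoidSpeed l1 l2 K) := by
  unfold helicoidSpeed
  fun_prop

theorem even : (helicoidSpeed l1 l2 K).Even := fun y => by
  simp only [helicoidSpeed, cos_neg, sin_neg, neg_sq]

theorem le_sqrt_max (y : ℝ) :
    helicoidSpeed l1 l2 K y ≤ √(max (l1 ^ 2 - K * l1 ^ 2) (l1 ^ 2 - K * l2 ^ 2)) := by
  rw [eq_sqrt_combo]
  exact sqrt_le_sqrt <| Convex.combo_le_max _ _ (sq_nonneg _) (sq_nonneg _) (cos_sq_add_sin_sq y)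

variable {l1 l2 K}

theorem pos (hKl1 : K * l1 ^ 2 < l1 ^ 2) (hKl2 : K * l2 ^ 2 < l1 ^ 2) (y : ℝ) :
    0 < helicoidSpeed l1 l2 K y := by
  rw [eq_sqrt_combo]
  exact sqrt_pos.2 <| convex_Ioi 0 (sub_pos.2 hKl1) (sub_pos.2 hKl2)
    (sq_nonneg _) (sq_nonneg _) (cos_sq_add_sin_sq y)

end helicoidSpeed

theorem helicoid_x3_properties_general
    {l1 l2 K : ℝ} (hl1 : 0 < l1) (hl2 : l2 ≠ 0) (hK0 : K ≠ 0) (hK1 : K < 1)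
    (hKl2 : K * l2 ^ 2 < l1 ^ 2)
    {b : ℝ → ℝ} (hb : Differentiable ℝ b) (hb0 : b 0 = 0)
    (hb' : ∀ v, deriv b v = helicoidSpeed l1 l2 K (b v))
    {W : ℝ} (hbW : ∀ v, b (v + W) = b v + π)
    {x3 : ℝ → ℝ} (hx3 : Differentiable ℝ x3) (hx30 : x3 0 = 0)
    (hx3' : ∀ v, deriv x3 v = l1 * l2 * K / (l1 + deriv b v)) :
    Function.Bijective x3 ∧ (∀ v, x3 (-v) = -x3 v) ∧ (∀ v, x3 (v + W) = x3 v + x3 W) := by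
  have hspeed_pos : ∀ y, 0 < helicoidSpeed l1 l2 K y :=
    helicoidSpeed.pos (mul_lt_of_lt_one_left (by positivity) hK1) hKl2
  have hb'_even : (deriv b).Even := even_deriv_of_odd <|
    odd_of_deriv_eq_comp_even (helicoidSpeed.continuous l1 l2 K) hspeed_pos
      (helicoidSpeed.even l1 l2 K) hb hb' hb0
  have hb'_periodic : (deriv b).Periodic W := periodic_deriv_of_apply_add hbW
  refine ⟨?_, ?_, fun v => ?_⟩
  · exact bijective_of_deriv_eq_div hx3 (mul_ne_zero (mul_ne_zero hl1.ne' hl2) hK0) hl1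
      (fun v => hb' v ▸ (hspeed_pos (b v)).le)
      (fun v => hb' v ▸ helicoidSpeed.le_sqrt_max l1 l2 K (b v)) hx3'
  · exact odd_of_even_deriv hx3 hx30 fun v => by rw [hx3', hx3', hb'_even v]
  · have hx3'_periodic : (deriv x3).Periodic W := fun u => by rw [hx3', hx3', hb'_periodic u]
    rw [apply_add_of_periodic_deriv hx3 hx3'_periodic v, hx30, sub_zero]

theorem helicoid_x3_properties
    (l1 l2 K : ℝ) (hl : l1 ≥ l2) (hl2 : l2 > 0) (hK : K ∈ Set.Ioo (-1 : ℝ) 1) (hK0 : K ≠ 0)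
    (b : ℝ → ℝ) (hb : Differentiable ℝ b) (hb0 : b 0 = 0)
    (hb' : ∀ v, deriv b v =
      Real.sqrt (l1 ^ 2 - K * (l1 ^ 2 * Real.cos (b v) ^ 2 + l2 ^ 2 * Real.sin (b v) ^ 2)))
    (W : ℝ) (hW : W > 0) (hbW : ∀ v, b (v + W) = b v + π)
    (x3 : ℝ → ℝ) (hx3 : Differentiable ℝ x3) (hx30 : x3 0 = 0)
    (hx3' : ∀ v, deriv x3 v = l1 * l2 * K / (l1 + deriv b v)) :
    Function.Bijective x3 ∧ (∀ v, x3 (-v) = -x3 v) ∧ (∀ v, x3 (v + W) = x3 v + x3 W) := by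
  have hKl2 : K * l2 ^ 2 < l1 ^ 2 :=
    (mul_lt_of_lt_one_left (by positivity) hK.2).trans_le (pow_le_pow_left₀ hl2.le hl 2)
  exact helicoid_x3_properties_general (hl2.trans_le hl) hl2.ne' hK0 hK.2 hKl2 hb hb0 hb' hbW
    hx3 hx30 hx3'
end

section
/- Let φ : ℝ → ℝ be differentiable with φ(0) = 0 and φ'(u) = √(c² + 2·cos θ·B(u) − D²·B(u)²) for all u, where B(u) = λ₁²·cos²(φ u) + λ₂²·sin²(φ u) and D = sin θ / c. Then: (1) φ is odd, i.e. φ(−u) = −φ(u) for all u; (2) there exists U > 0 such that φ(u + U) = φ(u) + π for all u ∈ ℝ; (3) for this U, φ(k·U) = k·π for every integer k, and φ((2k+1)·U/2) = (2k+1)·π/2 for every integer k. -/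
open Real

/-- The critical angle `θ_c⁺`. -/
noncomputable def thetaPlus (l1 c : ℝ) : ℝ :=
  if c > Real.sqrt 2 * l1 then π else Real.arccos (1 - c ^ 2 / l1 ^ 2)

/-- The quantity `B(u) = λ₁² cos²(φ u) + λ₂² sin²(φ u)`. -/
noncomputable def Bfun (l1 l2 : ℝ) (φ : ℝ → ℝ) (u : ℝ) : ℝ :=
  l1 ^ 2 * Real.cos (φ u) ^ 2 + l2 ^ 2 * Real.sin (φ u) ^ 2

/-!
Write the equation as `φ' = f(φ)` with `f > 0` continuous, even and `π`-periodic. Separating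
variables, `φ` is a right inverse of `G(x) = ∫₀ˣ dt / f(t)`, which is strictly increasing, odd, and
satisfies `G(x + π) = G(x) + G(π)`. Injectivity of `G` transfers both symmetries to `φ`, with
`U = G(π)`. The value at `U / 2` comes from playing oddness against the shift by `U` at `-U / 2`.

The angle condition enters only through `f > 0`: it amounts to `λ₁² (1 - cos θ) < c²`, and the
radicand factors as `(c² - B (1 - cos θ)) (c² + B (1 + cos θ)) / c²` with `0 ≤ B ≤ λ₁²`.
-/

open scoped AddConstMap

section AutonomousEquation

/-- The time a solution of `φ' = f(φ)` takes to travel from `0` to `x`. -/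
noncomputable def travelTime (f : ℝ → ℝ) (x : ℝ) : ℝ :=
  ∫ t in (0 : ℝ)..x, (f t)⁻¹

variable {f φ : ℝ → ℝ} {T : ℝ}

lemma travelTime_zero : travelTime f 0 = 0 :=
  intervalIntegral.integral_same

lemma travelTime_odd (hf : f.Even) : (travelTime f).Odd := by
  intro x
  calc ∫ t in (0 : ℝ)..-x, (f t)⁻¹
      = ∫ t in x..0, (f (-t))⁻¹ := by
        rw [intervalIntegral.integral_comp_neg fun t ↦ (f t)⁻¹, neg_zero]
    _ = -∫ t in (0 : ℝ)..x, (f t)⁻¹ := by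
        simp only [hf.eq, intervalIntegral.integral_symm 0 x]

lemma intervalIntegrable_inv_of_ne_zero (hf : Continuous f) (hf₀ : ∀ x, f x ≠ 0) (a b : ℝ) :
    IntervalIntegrable (fun t ↦ (f t)⁻¹) MeasureTheory.volume a b :=
  (hf.inv₀ hf₀).intervalIntegrable a b

lemma travelTime_add_period (hf : Continuous f) (hf₀ : ∀ x, f x ≠ 0) (hT : f.Periodic T) (x : ℝ) :
    travelTime f (x + T) = travelTime f x + travelTime f T := by
  have hT_inv : (fun t ↦ (f t)⁻¹).Periodic T := hT.comp (·⁻¹)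
  simpa only [travelTime, zero_add] using
    hT_inv.intervalIntegral_add_eq_add 0 x (intervalIntegrable_inv_of_ne_zero hf hf₀)

lemma travelTime_sub_travelTime (hf : Continuous f) (hf₀ : ∀ x, f x ≠ 0) (a b : ℝ) :
    travelTime f b - travelTime f a = ∫ t in a..b, (f t)⁻¹ :=
  intervalIntegral.integral_interval_sub_left
    (intervalIntegrable_inv_of_ne_zero hf hf₀ 0 b) (intervalIntegrable_inv_of_ne_zero hf hf₀ 0 a)

lemma travelTime_strictMono (hf : Continuous f) (hf_pos : ∀ x, 0 < f x) :
    StrictMono (travelTime f) := by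
  intro a b hab
  have hf₀ : ∀ x, f x ≠ 0 := fun x ↦ (hf_pos x).ne'
  rw [← sub_pos, travelTime_sub_travelTime hf hf₀]
  exact intervalIntegral.intervalIntegral_pos_of_pos (intervalIntegrable_inv_of_ne_zero hf hf₀ a b)
    (fun t ↦ inv_pos.2 (hf_pos t)) hab

lemma travelTime_pos (hf : Continuous f) (hf_pos : ∀ x, 0 < f x) (hT : 0 < T) :
    0 < travelTime f T := by
  simpa only [travelTime_zero] using travelTime_strictMono hf hf_pos hT

lemma travelTime_comp_sub_travelTime_comp (hf : Continuous f) (hf₀ : ∀ x, f x ≠ 0)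
    (hφ : ∀ u, HasDerivAt φ (f (φ u)) u) (u v : ℝ) :
    travelTime f (φ v) - travelTime f (φ u) = v - u := by
  have hφ_cont : Continuous φ := continuous_iff_continuousAt.2 fun w ↦ (hφ w).continuousAt
  calc travelTime f (φ v) - travelTime f (φ u)
      = ∫ x in φ u..φ v, (f x)⁻¹ := travelTime_sub_travelTime hf hf₀ _ _
    _ = ∫ w in u..v, (f (φ w))⁻¹ * f (φ w) :=
        (intervalIntegral.integral_comp_mul_deriv (fun w _ ↦ hφ w)
          (hf.comp hφ_cont).continuousOn (hf.inv₀ hf₀)).symm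
    _ = v - u := by simp [hf₀]

lemma solution_odd (hf : Continuous f) (hf_pos : ∀ x, 0 < f x) (hf_even : f.Even)
    (hφ : ∀ u, HasDerivAt φ (f (φ u)) u) (hφ₀ : φ 0 = 0) : φ.Odd := by
  have rightInv : ∀ u, travelTime f (φ u) = u := fun u ↦ by
    simpa only [hφ₀, travelTime_zero, sub_zero] using
      travelTime_comp_sub_travelTime_comp hf (fun x ↦ (hf_pos x).ne') hφ 0 u
  intro u
  apply (travelTime_strictMono hf hf_pos).injective
  rw [travelTime_odd hf_even, rightInv, rightInv]

lemma solution_add_travelTime (hf : Continuous f) (hf_pos : ∀ x, 0 < f x) (hT : f.Periodic T)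
    (hφ : ∀ u, HasDerivAt φ (f (φ u)) u) (u : ℝ) : φ (u + travelTime f T) = φ u + T := by
  have hf₀ : ∀ x, f x ≠ 0 := fun x ↦ (hf_pos x).ne'
  apply (travelTime_strictMono hf hf_pos).injective
  rw [travelTime_add_period hf hf₀ hT]
  linarith [travelTime_comp_sub_travelTime_comp hf hf₀ hφ u (u + travelTime f T)]

end AutonomousEquation

section AddConstMap

lemma addConstMap_int_mul {R S : Type*} [Ring R] [Ring S] {a : R} {b : S} (F : R →+c[a, b] S)
    (hF₀ : F 0 = 0) (k : ℤ) : F (k * a) = k * b := by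
  rw [← zsmul_eq_mul, AddConstMapClass.map_zsmul_const, hF₀, zero_add, zsmul_eq_mul]

variable {K L : Type*} [Field K] [NeZero (2 : K)] [Field L] [NeZero (2 : L)] {a : K} {b : L}

lemma addConstMap_half_of_odd (F : K →+c[a, b] L) (hF : Function.Odd F) : F (a / 2) = b / 2 := by
  have shift : F (a / 2) = -F (a / 2) + b :=
    calc F (a / 2) = F (-(a / 2) + a) := by rw [neg_add_eq_sub, sub_half]
      _ = -F (a / 2) + b := by rw [AddConstMapClass.map_add_const, hF.eq]
  rw [eq_div_iff two_ne_zero]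
  linear_combination shift

lemma addConstMap_odd_mul_half_of_odd (F : K →+c[a, b] L) (hF : Function.Odd F) (k : ℤ) :
    F ((2 * k + 1) * a / 2) = (2 * k + 1) * b / 2 := by
  calc F ((2 * k + 1) * a / 2) = F (a / 2 + k • a) := by
        congr 1
        rw [zsmul_eq_mul]
        field_simp
        ring
    _ = b / 2 + k • b := by rw [AddConstMapClass.map_add_zsmul, addConstMap_half_of_odd F hF]
    _ = (2 * k + 1) * b / 2 := by
        rw [zsmul_eq_mul]
        field_simp
        ring

end AddConstMap

section CriticalAngle

lemma lt_cos_of_abs_lt_arccos {y θ : ℝ} (h : |θ| < arccos y) : y < cos θ := by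
  by_contra! hy
  have hle : arccos y ≤ |θ| :=
    calc arccos y ≤ arccos (cos |θ|) := arccos_le_arccos (by rwa [cos_abs])
      _ = |θ| := arccos_cos (abs_nonneg θ) (h.le.trans (arccos_le_pi y))
  exact hle.not_gt h

variable {l1 c θ : ℝ}

lemma thetaPlus_eq_arccos (hl1 : 0 < l1) : thetaPlus l1 c = arccos (1 - c ^ 2 / l1 ^ 2) := by
  unfold thetaPlus
  split_ifs with h
  · have hsq : 2 * l1 ^ 2 ≤ c ^ 2 :=
      calc 2 * l1 ^ 2 = (√2 * l1) ^ 2 := by rw [mul_pow, sq_sqrt zero_le_two]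
        _ ≤ c ^ 2 := pow_le_pow_left₀ (by positivity) h.le 2
    have hdiv : 2 ≤ c ^ 2 / l1 ^ 2 := (le_div_iff₀ (by positivity)).2 hsq
    rw [arccos_of_le_neg_one (by linarith)]
  · rfl

lemma sq_mul_one_sub_cos_lt_sq (hl1 : 0 < l1) (hθ : |θ| < thetaPlus l1 c) :
    l1 ^ 2 * (1 - cos θ) < c ^ 2 := by
  rw [thetaPlus_eq_arccos hl1] at hθ
  have hcos : 1 - cos θ < c ^ 2 / l1 ^ 2 := by linarith [lt_cos_of_abs_lt_arccos hθ]
  rwa [lt_div_iff₀' (by positivity)] at hcos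

end CriticalAngle

section PhaseSpeed

/-- The value of `φ'(u)²` prescribed by the equation, as a function of `b = B(u)`. -/
noncomputable def speedSq (c θ b : ℝ) : ℝ :=
  c ^ 2 + 2 * cos θ * b - (sin θ / c) ^ 2 * b ^ 2

/-- The right-hand side `f` of the equation in its autonomous form `φ' = f(φ)`; the expression `B`
at the phase `x` itself is `Bfun` taken along `id`. -/
noncomputable def phaseSpeed (l1 l2 c θ x : ℝ) : ℝ :=
  √(speedSq c θ (Bfun l1 l2 id x))

variable {l1 l2 c θ b : ℝ}

lemma speedSq_eq_div (hc : c ≠ 0) :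
    speedSq c θ b = (c ^ 2 - b * (1 - cos θ)) * (c ^ 2 + b * (1 + cos θ)) / c ^ 2 := by
  rw [speedSq, div_pow, sin_sq]
  field_simp
  ring

lemma speedSq_pos (hc : c ≠ 0) (hb : 0 ≤ b) (hbc : b * (1 - cos θ) < c ^ 2) :
    0 < speedSq c θ b := by
  have hcos : 0 ≤ 1 + cos θ := by linarith [neg_one_le_cos θ]
  have hright : 0 < c ^ 2 + b * (1 + cos θ) := by positivity
  rw [speedSq_eq_div hc]
  exact div_pos (mul_pos (sub_pos.2 hbc) hright) (by positivity)

lemma Bfun_nonneg (φ : ℝ → ℝ) (u : ℝ) : 0 ≤ Bfun l1 l2 φ u := by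
  unfold Bfun
  positivity

lemma Bfun_le_sq (h : l2 ^ 2 ≤ l1 ^ 2) (φ : ℝ → ℝ) (u : ℝ) : Bfun l1 l2 φ u ≤ l1 ^ 2 :=
  calc Bfun l1 l2 φ u ≤ l1 ^ 2 * cos (φ u) ^ 2 + l1 ^ 2 * sin (φ u) ^ 2 := by
        unfold Bfun
        gcongr
    _ = l1 ^ 2 := by rw [← mul_add, cos_sq_add_sin_sq, mul_one]

lemma phaseSpeed_continuous : Continuous (phaseSpeed l1 l2 c θ) := by
  unfold phaseSpeed speedSq Bfun
  fun_prop

lemma phaseSpeed_even : (phaseSpeed l1 l2 c θ).Even := fun x ↦ by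
  simp [phaseSpeed, Bfun]

lemma phaseSpeed_periodic : (phaseSpeed l1 l2 c θ).Periodic π := fun x ↦ by
  simp [phaseSpeed, Bfun]

lemma phaseSpeed_pos (hl1 : 0 < l1) (hl : l2 ^ 2 ≤ l1 ^ 2) (hc : c ≠ 0)
    (hθ : |θ| < thetaPlus l1 c) (x : ℝ) : 0 < phaseSpeed l1 l2 c θ x := by
  have hB : Bfun l1 l2 id x ≤ l1 ^ 2 := Bfun_le_sq hl id x
  have hcos : 0 ≤ 1 - cos θ := sub_nonneg.2 (cos_le_one θ)
  refine sqrt_pos.2 (speedSq_pos hc (Bfun_nonneg id x) ?_)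
  calc Bfun l1 l2 id x * (1 - cos θ) ≤ l1 ^ 2 * (1 - cos θ) := by gcongr
    _ < c ^ 2 := sq_mul_one_sub_cos_lt_sq hl1 hθ

end PhaseSpeed

theorem catenoid_phi_odd_quasiperiodic
    (l1 l2 c θ : ℝ) (hl : l1 ≥ l2) (hl2 : l2 > 0) (hc : c > 0)
    (hθ : |θ| < thetaPlus l1 c)
    (φ : ℝ → ℝ) (hφ : Differentiable ℝ φ) (hφ0 : φ 0 = 0)
    (hφ' : ∀ u, deriv φ u =
      Real.sqrt (c ^ 2 + 2 * Real.cos θ * Bfun l1 l2 φ u -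
        (Real.sin θ / c) ^ 2 * Bfun l1 l2 φ u ^ 2)) :
    (∀ u, φ (-u) = -φ u) ∧
    ∃ U > 0, (∀ u, φ (u + U) = φ u + π) ∧
      (∀ k : ℤ, φ (k * U) = k * π) ∧
      (∀ k : ℤ, φ ((2 * k + 1) * U / 2) = (2 * k + 1) * π / 2) := by
  have hf_pos : ∀ x, 0 < phaseSpeed l1 l2 c θ x :=
    phaseSpeed_pos (hl2.trans_le hl) (pow_le_pow_left₀ hl2.le hl 2) hc.ne' hθ
  have hode : ∀ u, HasDerivAt φ (phaseSpeed l1 l2 c θ (φ u)) u := fun u ↦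
    (hφ u).hasDerivAt.congr_deriv (hφ' u)
  have hodd : φ.Odd := solution_odd phaseSpeed_continuous hf_pos phaseSpeed_even hode hφ0
  let U := travelTime (phaseSpeed l1 l2 c θ) π
  have hshift : ∀ u, φ (u + U) = φ u + π :=
    solution_add_travelTime phaseSpeed_continuous hf_pos phaseSpeed_periodic hode
  let Φ : ℝ →+c[U, π] ℝ := ⟨φ, hshift⟩
  exact ⟨hodd, U, travelTime_pos phaseSpeed_continuous hf_pos pi_pos, hshift,
    addConstMap_int_mul Φ hφ0, addConstMap_odd_mul_half_of_odd Φ hodd⟩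
end
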